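/- arXiv:1106.3112 — 3 statements merged into one kernel-verified Lean document; each statement's English description precedes it below -/
import Mathlib

section
/- Let A = ℂ[X₁, X₂, X₃, …] be the polynomial algebra over ℂ in countably infinitely many variables, and let 𝔭 be a prime ideal of A of finite height. Then the localization A_𝔭 of A at 𝔭 is a regular local ring; in particular, A_𝔭 is Noetherian. -/
/-!
The ideals of a polynomial ring generated by the part of a prime `P` living in finitely many
variables are again prime, and they form a directed family with union `P`. If `P` has finite height,
such a family is stationary, so `P` is extended from a prime `p` of a polynomial ring in finitely
many variables.

Hence every prime of finite height is finitely generated, and by Cohen's theorem the localization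
at `P` is Noetherian. Its maximal ideal is extended from the maximal ideal of the regular local ring
at `p`, so it needs at most `ht p` generators, and `ht p ≤ ht P` because primes extend to primes.
-/

open MvPolynomial IsLocalRing

section Order

variable {α ι : Type*} [Preorder α] [Nonempty ι]

lemma exists_forall_le_of_directed_of_height_ne_top {f : ι → α} (hf : Directed (· ≤ ·) f) {a : α}
    (hfa : ∀ i, f i ≤ a) (ha : Order.height a ≠ ⊤) : ∃ i, ∀ j, f j ≤ f i := by
  have hsup : ⨆ i, Order.height (f i) < ⊤ :=
    (iSup_le fun i ↦ Order.height_mono (hfa i)).trans_lt ha.lt_top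
  obtain ⟨i, hi⟩ := ENat.exists_eq_iSup_of_lt_top hsup
  refine ⟨i, fun j ↦ ?_⟩
  obtain ⟨k, hik, hjk⟩ := hf i j
  by_contra hji
  have hlt : f i < f k := lt_of_le_not_ge hik fun hki ↦ hji (hjk.trans hki)
  have hmax : Order.height (f k) ≤ Order.height (f i) :=
    hi ▸ le_iSup (fun l ↦ Order.height (f l)) k
  exact hmax.not_gt (Order.height_strictMono hlt ((le_iSup _ i).trans_lt hsup))

end Order

section CommutativeAlgebra

variable {R S : Type*} [CommRing R] [CommRing S]

lemma comap_map_eq_of_comp_eq_id {f : R →+* S} {g : S →+* R} (hgf : g.comp f = RingHom.id R)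
    (I : Ideal R) : (I.map f).comap f = I := by
  refine le_antisymm (fun x hx ↦ ?_) Ideal.le_comap_map
  have hgx : g (f x) ∈ (I.map f).map g := Ideal.mem_map_of_mem g hx
  rwa [Ideal.map_map, ← RingHom.comp_apply, hgf, Ideal.map_id] at hgx

lemma isNoetherianRing_localization_atPrime_of_forall_fg (P : Ideal R) [P.IsPrime]
    (hfg : ∀ Q ≤ P, Q.IsPrime → Q.FG) : IsNoetherianRing (Localization.AtPrime P) := by
  refine .of_prime fun I hI ↦ ?_
  have hle : I.under R ≤ P :=
    (IsLocalization.AtPrime.orderIsoOfPrime (Localization.AtPrime P) P ⟨I, hI⟩).2.2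
  rw [← IsLocalization.map_under P.primeCompl _ I]
  exact (hfg _ hle (hI.under R)).map _

lemma isRegularLocalRing_of_map_maximalIdeal_eq [IsRegularLocalRing R] [IsLocalRing S]
    [IsNoetherianRing S] (f : R →+* S) (hf : (maximalIdeal R).map f = maximalIdeal S)
    (hdim : ringKrullDim R ≤ ringKrullDim S) : IsRegularLocalRing S := by
  apply IsRegularLocalRing.of_spanFinrank_maximalIdeal_le
  calc ((maximalIdeal S).spanFinrank : WithBot ℕ∞)
      = ((maximalIdeal R).map f).spanFinrank := by rw [hf]
    _ ≤ (maximalIdeal R).spanFinrank := by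
      exact_mod_cast Ideal.spanFinrank_map_le_of_fg f (maximalIdeal R).fg_of_isNoetherianRing
    _ = ringKrullDim R := IsRegularLocalRing.spanFinrank_maximalIdeal
    _ ≤ ringKrullDim S := hdim

lemma map_localRingHom_maximalIdeal (f : R →+* S) (P : Ideal S) [P.IsPrime]
    (hP : (P.comap f).map f = P) :
    (maximalIdeal (Localization.AtPrime (P.comap f))).map (Localization.localRingHom _ P f rfl) =
      maximalIdeal (Localization.AtPrime P) := by
  have hcomp : (Localization.localRingHom _ P f rfl).comp (algebraMap R _) =
      (algebraMap S (Localization.AtPrime P)).comp f :=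
    RingHom.ext fun x ↦ Localization.localRingHom_to_map _ P f rfl x
  rw [← Localization.AtPrime.map_eq_maximalIdeal, ← Localization.AtPrime.map_eq_maximalIdeal,
    Ideal.map_map, hcomp, ← Ideal.map_map, hP]

lemma isRegularLocalRing_localization_of_map_comap_eq (f : R →+* S) (P : Ideal S) [P.IsPrime]
    [IsRegularLocalRing (Localization.AtPrime (P.comap f))]
    [IsNoetherianRing (Localization.AtPrime P)] (hP : (P.comap f).map f = P)
    (hheight : (P.comap f).height ≤ P.height) : IsRegularLocalRing (Localization.AtPrime P) := by
  refine isRegularLocalRing_of_map_maximalIdeal_eq (Localization.localRingHom _ P f rfl)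
    (map_localRingHom_maximalIdeal f P hP) ?_
  rw [IsLocalization.AtPrime.ringKrullDim_eq_height (P.comap f),
    IsLocalization.AtPrime.ringKrullDim_eq_height P]
  exact_mod_cast hheight

lemma exists_finset_span_eq_maximalIdeal_card_eq_ringKrullDim (R : Type*) [CommRing R]
    [IsRegularLocalRing R] :
    ∃ s : Finset R, Ideal.span (s : Set R) = maximalIdeal R ∧
      (s.card : WithBot ℕ∞) = ringKrullDim R := by
  obtain ⟨s, hcard, hspan⟩ :=
    Submodule.FG.exists_span_finset_card_eq_spanFinrank (maximalIdeal R).fg_of_isNoetherianRing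
  exact ⟨s, hspan, by rw [hcard, IsRegularLocalRing.spanFinrank_maximalIdeal]⟩

end CommutativeAlgebra

section Rename

variable {σ τ R : Type*} [CommRing R]

lemma isPrime_map_mvPolynomial_C {P : Ideal R} (hP : P.IsPrime) :
    (P.map (C : R →+* MvPolynomial σ R)).IsPrime := by
  rw [← Ideal.Quotient.isDomain_iff_prime]
  exact (quotientEquivQuotientMvPolynomial (σ := σ) P).symm.toMulEquiv.isDomain _

lemma exists_ringEquiv_comp_C_eq_rename {f : σ → τ} (hf : Function.Injective f) :
    ∃ e : MvPolynomial ↥(Set.range f)ᶜ (MvPolynomial σ R) ≃+* MvPolynomial τ R,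
      e.toRingHom.comp C = (rename (R := R) f).toRingHom := by
  classical
  let eVars : ↥(Set.range f)ᶜ ⊕ σ ≃ τ :=
    ((Equiv.sumComm _ _).trans (Equiv.sumCongr (Equiv.ofInjective f hf) (Equiv.refl _))).trans
      (Equiv.Set.sumCompl (Set.range f))
  refine ⟨((sumAlgEquiv R _ σ).symm.trans (renameEquiv R eVars)).toRingEquiv, ?_⟩
  ext i <;> simp [eVars]

lemma isPrime_map_rename {f : σ → τ} (hf : Function.Injective f)
    {P : Ideal (MvPolynomial σ R)} (hP : P.IsPrime) :
    (P.map (rename (R := R) f)).IsPrime := by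
  obtain ⟨e, he⟩ := exists_ringEquiv_comp_C_eq_rename (R := R) hf
  have := isPrime_map_mvPolynomial_C (σ := ↥(Set.range f)ᶜ) hP
  change (P.map (rename (R := R) f).toRingHom).IsPrime
  rw [← he, ← Ideal.map_map]
  exact Ideal.map_isPrime_of_equiv e

lemma comap_map_rename {f : σ → τ} (hf : Function.Injective f) (I : Ideal (MvPolynomial σ R)) :
    (I.map (rename (R := R) f)).comap (rename f) = I :=
  comap_map_eq_of_comp_eq_id (f := (rename (R := R) f).toRingHom) (g := (killCompl hf).toRingHom)
    (congrArg AlgHom.toRingHom (killCompl_comp_rename hf)) I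

/-- Extension of prime ideals along an injective renaming of the variables, as an embedding of the
ordered set of primes. -/
noncomputable def primeSpectrumRename {f : σ → τ} (hf : Function.Injective f) :
    PrimeSpectrum (MvPolynomial σ R) ↪o PrimeSpectrum (MvPolynomial τ R) :=
  OrderEmbedding.ofMapLEIff
    (fun Q ↦ ⟨Q.asIdeal.map (rename (R := R) f), isPrime_map_rename hf Q.isPrime⟩)
    fun Q₁ Q₂ ↦ by
      change Q₁.asIdeal.map (rename (R := R) f) ≤ Q₂.asIdeal.map (rename f) ↔ _
      rw [Ideal.map_le_iff_le_comap, comap_map_rename hf, PrimeSpectrum.asIdeal_le_asIdeal]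

lemma height_le_height_map_rename {f : σ → τ} (hf : Function.Injective f)
    (P : Ideal (MvPolynomial σ R)) [hP : P.IsPrime] :
    P.height ≤ (P.map (rename (R := R) f)).height := by
  have hle := Order.height_le_height_apply_of_strictMono _
    (primeSpectrumRename (R := R) hf).strictMono ⟨P, hP⟩
  rwa [← PrimeSpectrum.height_eq_orderHeight, ← PrimeSpectrum.height_eq_orderHeight] at hle

end Rename

section SupportedPart

variable {σ R : Type*} [CommRing R]

/-- The ideal generated by the elements of `I` that only involve variables from `s`. -/
noncomputable def supportedPart (s : Set σ) (I : Ideal (MvPolynomial σ R)) :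
    Ideal (MvPolynomial σ R) :=
  Ideal.span (I ∩ supported R s)

lemma supportedPart_le (s : Set σ) (I : Ideal (MvPolynomial σ R)) : supportedPart s I ≤ I :=
  Ideal.span_le.mpr Set.inter_subset_left

lemma supportedPart_mono (I : Ideal (MvPolynomial σ R)) :
    Monotone fun s : Set σ ↦ supportedPart s I :=
  fun _ _ hst ↦ Ideal.span_mono (Set.inter_subset_inter_right _ (supported_mono hst))

lemma mem_supportedPart_vars {I : Ideal (MvPolynomial σ R)} {p : MvPolynomial σ R} (hp : p ∈ I) :
    p ∈ supportedPart (p.vars : Set σ) I :=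
  Ideal.subset_span ⟨hp, mem_supported_vars p⟩

lemma map_comap_rename_eq_supportedPart (s : Set σ) (I : Ideal (MvPolynomial σ R)) :
    (I.comap (rename (R := R) ((↑) : s → σ))).map (rename (↑)) = supportedPart s I := by
  rw [supportedPart, supported_eq_range_rename, Ideal.map, Ideal.coe_comap,
    Set.image_preimage_eq_inter_range]
  rfl

lemma isPrime_supportedPart (s : Set σ) {P : Ideal (MvPolynomial σ R)} (hP : P.IsPrime) :
    (supportedPart s P).IsPrime := by
  rw [← map_comap_rename_eq_supportedPart]
  exact isPrime_map_rename Subtype.val_injective (hP.comap _)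

lemma height_comap_rename_le_height_supportedPart (s : Set σ) (P : Ideal (MvPolynomial σ R))
    [P.IsPrime] :
    (P.comap (rename (R := R) ((↑) : s → σ))).height ≤ (supportedPart s P).height := by
  rw [← map_comap_rename_eq_supportedPart]
  exact height_le_height_map_rename Subtype.val_injective _

lemma exists_finset_supportedPart_eq {P : Ideal (MvPolynomial σ R)} (hP : P.IsPrime)
    (hfin : P.height ≠ ⊤) : ∃ s : Finset σ, supportedPart (s : Set σ) P = P := by
  classical
  let Q (s : Finset σ) : PrimeSpectrum (MvPolynomial σ R) :=
    ⟨supportedPart (s : Set σ) P, isPrime_supportedPart _ hP⟩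
  have hQ : Monotone Q := fun s t hst ↦ supportedPart_mono P (Finset.coe_subset.mpr hst)
  obtain ⟨s, hs⟩ := exists_forall_le_of_directed_of_height_ne_top hQ.directed_le (a := ⟨P, hP⟩)
    (fun s ↦ supportedPart_le _ P) (by rwa [← PrimeSpectrum.height_eq_orderHeight])
  exact ⟨s, (supportedPart_le _ P).antisymm fun p hp ↦ hs p.vars (mem_supportedPart_vars hp)⟩

end SupportedPart

section FiniteHeight

variable {σ R : Type*} [CommRing R]

lemma fg_of_isPrime_of_height_ne_top [IsNoetherianRing R] {P : Ideal (MvPolynomial σ R)}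
    (hP : P.IsPrime) (hfin : P.height ≠ ⊤) : P.FG := by
  obtain ⟨s, hs⟩ := exists_finset_supportedPart_eq hP hfin
  rw [← hs, ← map_comap_rename_eq_supportedPart]
  exact (Ideal.fg_of_isNoetherianRing _).map _

lemma isNoetherianRing_localization_of_height_ne_top [IsNoetherianRing R]
    (P : Ideal (MvPolynomial σ R)) [P.IsPrime] (hfin : P.height ≠ ⊤) :
    IsNoetherianRing (Localization.AtPrime P) :=
  isNoetherianRing_localization_atPrime_of_forall_fg P fun _ hQP hQ ↦
    fg_of_isPrime_of_height_ne_top hQ (ne_top_of_le_ne_top hfin (Ideal.height_mono hQP))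

lemma isRegularLocalRing_localization_of_height_ne_top [IsRegularRing R]
    (P : Ideal (MvPolynomial σ R)) [hP : P.IsPrime] (hfin : P.height ≠ ⊤) :
    IsRegularLocalRing (Localization.AtPrime P) := by
  obtain ⟨s, hs⟩ := exists_finset_supportedPart_eq hP hfin
  have hmap := (map_comap_rename_eq_supportedPart (s : Set σ) P).trans hs
  have hheight := (height_comap_rename_le_height_supportedPart (s : Set σ) P).trans_eq
    (congrArg Ideal.height hs)
  have := isNoetherianRing_localization_of_height_ne_top P hfin
  exact isRegularLocalRing_localization_of_map_comap_eq (rename (R := R) _).toRingHom P hmap hheight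

end FiniteHeight

theorem localization_at_finite_height_prime_is_regular_local_general {σ R : Type*} [CommRing R]
    [IsRegularRing R] (𝔭 : Ideal (MvPolynomial σ R)) (hp : 𝔭.IsPrime)
    (hfin : Order.height (⟨𝔭, hp⟩ : PrimeSpectrum (MvPolynomial σ R)) ≠ ⊤) :
    IsNoetherianRing (Localization.AtPrime 𝔭) ∧
    ∃ s : Finset (Localization.AtPrime 𝔭),
      Ideal.span (s : Set (Localization.AtPrime 𝔭)) =
        IsLocalRing.maximalIdeal (Localization.AtPrime 𝔭) ∧
      (s.card : WithBot ℕ∞) = ringKrullDim (Localization.AtPrime 𝔭) := by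
  rw [← PrimeSpectrum.height_eq_orderHeight] at hfin
  have := isRegularLocalRing_localization_of_height_ne_top 𝔭 hfin
  exact ⟨inferInstance, exists_finset_span_eq_maximalIdeal_card_eq_ringKrullDim _⟩

/-- Let `A = ℂ[X₁, X₂, …] = MvPolynomial ℕ ℂ` and let `𝔭`
be a prime ideal of finite height. Then the localization `A_𝔭` is a regular
local ring (a Noetherian local ring whose maximal ideal is generated by
`Krull dimension` many elements); in particular it is Noetherian. -/
theorem localization_at_finite_height_prime_is_regular_local
    (𝔭 : Ideal (MvPolynomial ℕ ℂ)) (hp : 𝔭.IsPrime)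
    (hfin : Order.height (⟨𝔭, hp⟩ : PrimeSpectrum (MvPolynomial ℕ ℂ)) ≠ ⊤) :
    IsNoetherianRing (Localization.AtPrime 𝔭) ∧
    ∃ s : Finset (Localization.AtPrime 𝔭),
      Ideal.span (s : Set (Localization.AtPrime 𝔭)) =
        IsLocalRing.maximalIdeal (Localization.AtPrime 𝔭) ∧
      (s.card : WithBot ℕ∞) = ringKrullDim (Localization.AtPrime 𝔭) :=
  localization_at_finite_height_prime_is_regular_local_general 𝔭 hp hfin
end

section
/- Let A = ℂ[X₁, X₂, X₃, …] be the polynomial algebra over ℂ in countably infinitely many variables. For any nonzero finitely presented A-module N, there exists a prime ideal 𝔭 of A of finite height such that the localization N_𝔭 of N at 𝔭 is nonzero. -/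
/-!
The support of a finitely presented module is the zero locus of its zeroth Fitting ideal, which is
generated by finitely many minors, say `m` of them. A prime `𝔭` minimal over this ideal lies in the
support. A chain of primes below `𝔭` is kept strict by finitely many elements, and these and the
minors lie in a polynomial subring in finitely many variables. The subring is Noetherian and its
inclusion is flat, so by going-down the contraction of `𝔭` is still minimal over the `m` minors.
Krull's height theorem in the subring thus bounds the length of the chain by `m`.
-/

section FittingIdeal

variable {A ι κ : Type*} [CommRing A] [Fintype ι] [DecidableEq ι]

/-- The zeroth Fitting ideal of the module presented by the matrix `M`, whose rows are the
relations. It is a substitute for the annihilator that is finitely generated when `M` is finite. The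
choice `f` of rows need not be injective: a repeated row only contributes the generator `0`. -/
def zerothFittingIdeal (M : Matrix κ ι A) : Ideal A :=
  Ideal.span (Set.range fun f : ι → κ => (M.submatrix f id).det)

theorem zerothFittingIdeal_fg [Finite κ] (M : Matrix κ ι A) : (zerothFittingIdeal M).FG :=
  Submodule.fg_span (Set.finite_range _)

theorem det_mul_eq_sum_prod_mul_det_submatrix [Fintype κ] (C : Matrix ι κ A) (M : Matrix κ ι A) :
    (C * M).det = ∑ f : ι → κ, (∏ i, C i (f i)) * (M.submatrix f id).det := by
  have hrow (i : ι) : (C * M) i = ∑ j, C i j • M j := by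
    rw [← Matrix.vecMul_eq_sum]
    rfl
  calc (C * M).det = Matrix.detRowAlternating fun i => ∑ j, C i j • M j :=
        congr_arg Matrix.det (funext hrow)
    _ = ∑ f : ι → κ, Matrix.detRowAlternating fun i => C i (f i) • M (f i) :=
        Matrix.detRowAlternating.toMultilinearMap.map_sum _
    _ = ∑ f : ι → κ, (∏ i, C i (f i)) * (M.submatrix f id).det :=
        Finset.sum_congr rfl fun f _ =>
          Matrix.detRowAlternating.toMultilinearMap.map_smul_univ _ _

theorem det_mul_mem_zerothFittingIdeal [Fintype κ] (C : Matrix ι κ A) (M : Matrix κ ι A) :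
    (C * M).det ∈ zerothFittingIdeal M := by
  rw [det_mul_eq_sum_prod_mul_det_submatrix]
  exact sum_mem fun f _ => Ideal.mul_mem_left _ _ (Ideal.subset_span ⟨f, rfl⟩)

theorem zerothFittingIdeal_le_annihilator [Fintype κ] (M : Matrix κ ι A) :
    zerothFittingIdeal M ≤
      Module.annihilator A ((ι → A) ⧸ LinearMap.range M.vecMulLinear) := by
  refine Ideal.span_le.mpr ?_
  rintro _ ⟨f, rfl⟩
  refine Module.mem_annihilator.mpr fun y => ?_
  obtain ⟨x, rfl⟩ := Submodule.mkQ_surjective _ y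
  have cramer : (M.submatrix f id).det • x =
      Matrix.vecMul (Matrix.vecMul x (M.submatrix f id).adjugate) (M.submatrix f id) := by
    rw [Matrix.vecMul_vecMul, Matrix.adjugate_mul, Matrix.vecMul_smul, Matrix.vecMul_one]
  rw [← map_smul, Submodule.mkQ_apply, Submodule.Quotient.mk_eq_zero, cramer, Matrix.vecMul_eq_sum,
    range_vecMulLinear]
  exact sum_mem fun i _ => Submodule.smul_mem _ _ (Submodule.subset_span ⟨f i, rfl⟩)

theorem pow_card_mem_zerothFittingIdeal [Fintype κ] {M : Matrix κ ι A} {a : A}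
    (ha : a ∈ Module.annihilator A ((ι → A) ⧸ LinearMap.range M.vecMulLinear)) :
    a ^ Fintype.card ι ∈ zerothFittingIdeal M := by
  have hrow (i : ι) : a • Pi.single i 1 ∈ LinearMap.range M.vecMulLinear := by
    rw [← Submodule.Quotient.mk_eq_zero, Submodule.Quotient.mk_smul]
    exact Module.mem_annihilator.mp ha _
  choose C hC using hrow
  have hCM : Matrix.of C * M = a • (1 : Matrix ι ι A) := by
    ext i j
    refine (congr_fun (hC i) j).trans ?_
    simp [Matrix.one_apply, Pi.single_apply, eq_comm]
  simpa [hCM] using det_mul_mem_zerothFittingIdeal (Matrix.of C) M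

theorem support_eq_zeroLocus_zerothFittingIdeal [Fintype κ] (M : Matrix κ ι A) :
    Module.support A ((ι → A) ⧸ LinearMap.range M.vecMulLinear) =
      PrimeSpectrum.zeroLocus (zerothFittingIdeal M) := by
  rw [Module.support_eq_zeroLocus]
  refine (PrimeSpectrum.zeroLocus_anti_mono_ideal (zerothFittingIdeal_le_annihilator M)).antisymm ?_
  rw [PrimeSpectrum.zeroLocus_subset_zeroLocus_iff]
  exact fun a ha => ⟨_, pow_card_mem_zerothFittingIdeal ha⟩

end FittingIdeal

theorem exists_fg_support_eq_zeroLocus (A N : Type*) [CommRing A] [AddCommGroup N] [Module A N]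
    [Module.FinitePresentation A N] :
    ∃ I : Ideal A, I.FG ∧ Module.support A N = PrimeSpectrum.zeroLocus I := by
  obtain ⟨n, K, e, hK⟩ := Module.FinitePresentation.exists_fin A N
  obtain ⟨m, M, rfl⟩ := Submodule.fg_iff_exists_fin_generating_family.mp hK
  refine ⟨zerothFittingIdeal (Matrix.of M), zerothFittingIdeal_fg _, ?_⟩
  rw [← support_eq_zeroLocus_zerothFittingIdeal, range_vecMulLinear]
  exact e.support_eq

theorem comap_mem_minimalPrimes_of_hasGoingDown {R A : Type*} [CommRing R] [CommRing A]
    [Algebra R A] [Algebra.HasGoingDown R A] {I : Ideal R} {p : Ideal A}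
    (hp : p ∈ (I.map (algebraMap R A)).minimalPrimes) :
    p.comap (algebraMap R A) ∈ I.minimalPrimes := by
  have : p.IsPrime := hp.1.1
  refine ⟨⟨inferInstance, Ideal.map_le_iff_le_comap.mp hp.1.2⟩, ?_⟩
  rintro q ⟨hq, hIq⟩ hqp
  have : p.LiesOver (p.comap (algebraMap R A)) := ⟨rfl⟩
  obtain ⟨P, hPp, hP, hPq⟩ := Ideal.exists_ideal_le_liesOver_of_le p hqp
  have hIP : I.map (algebraMap R A) ≤ P :=
    Ideal.map_le_iff_le_comap.mpr (hIq.trans_eq hPq.over)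
  rw [hPq.over]
  exact Ideal.comap_mono (hp.2 ⟨hP, hIP⟩ hPp)

theorem exists_finset_length_le_height_comap {A : Type*} [CommRing A]
    (l : LTSeries (PrimeSpectrum A)) :
    ∃ S : Finset A, ∀ R : Subring A, (S : Set A) ⊆ R →
      l.length ≤ Order.height (PrimeSpectrum.comap R.subtype l.last) := by
  classical
  have hsep (i : Fin l.length) :
      ∃ f ∈ (l i.succ).asIdeal, f ∉ (l i.castSucc).asIdeal :=
    SetLike.exists_of_lt (l.step i)
  choose f hf hf' using hsep
  refine ⟨Finset.univ.image f, fun R hR => ?_⟩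
  have hfR (i : Fin l.length) : f i ∈ R := hR (by simp)
  let L : LTSeries (PrimeSpectrum R) :=
    { length := l.length
      toFun := fun i => PrimeSpectrum.comap R.subtype (l i)
      step := fun i => lt_of_le_not_ge (Ideal.comap_mono (l.step i).le)
        fun h => hf' i (h (show (⟨f i, hfR i⟩ : R) ∈ _ from hf i)) }
  exact Order.length_le_height_last (p := L)

/-- Every finite subset of `A` lies in a Noetherian subring `R` such that going-down holds for
`R ⊆ A`. This is the property of polynomial rings in infinitely many variables that makes Krull's
height theorem survive the loss of Noetherianity. -/
def HasNoetherianGoingDownSubrings (A : Type*) [CommRing A] : Prop :=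
  ∀ S : Finset A, ∃ R : Subring A,
    (S : Set A) ⊆ R ∧ IsNoetherianRing R ∧ Algebra.HasGoingDown R A

theorem HasNoetherianGoingDownSubrings.height_le_card_of_mem_minimalPrimes_span
    {A : Type*} [CommRing A] (hA : HasNoetherianGoingDownSubrings A) {T : Finset A} {p : Ideal A}
    (hp : p ∈ (Ideal.span (T : Set A)).minimalPrimes) : p.height ≤ T.card := by
  classical
  have : p.IsPrime := hp.1.1
  rw [PrimeSpectrum.height_eq_orderHeight ⟨p, this⟩]
  refine Order.height_le fun l hl => ?_
  obtain ⟨S, hS⟩ := exists_finset_length_le_height_comap l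
  obtain ⟨R, hR, _, _⟩ := hA (S ∪ T)
  rw [Finset.coe_union, Set.union_subset_iff] at hR
  let U : Finset R := T.subtype (· ∈ R)
  have hU : (Ideal.span (U : Set R)).map (algebraMap R A) = Ideal.span T := by
    rw [Ideal.map_span]
    refine congr_arg Ideal.span ?_
    calc R.subtype '' U = (U.map (.subtype (· ∈ R)) : Finset A) := by
          rw [Finset.coe_map]
          rfl
      _ = T := congr_arg _ (Finset.subtype_map_of_mem hR.2)
  calc (l.length : ℕ∞)
    _ ≤ Order.height (PrimeSpectrum.comap R.subtype l.last) := hS R hR.1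
    _ = (p.comap (algebraMap R A)).height := by
      rw [hl, ← PrimeSpectrum.height_eq_orderHeight]
      rfl
    _ ≤ U.card := Ideal.height_le_card_of_mem_minimalPrimes_span_finset
      (comap_mem_minimalPrimes_of_hasGoingDown (hU ▸ hp))
    _ ≤ T.card := by
      rw [Finset.card_subtype]
      exact_mod_cast Finset.card_filter_le _ _

theorem flat_algEquiv {k R A : Type*} [CommRing k] [CommRing R] [CommRing A] [Algebra k R]
    [Algebra k A] (e : R ≃ₐ[k] A) : (e : R →ₐ[k] A).toRingHom.Flat :=
  .of_bijective e.bijective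

section MvPolynomial

variable {σ τ k : Type*} [CommRing k]

open MvPolynomial

theorem flat_rename_inr :
    (rename Sum.inr : MvPolynomial τ k →ₐ[k] MvPolynomial (σ ⊕ τ) k).toRingHom.Flat := by
  have hC : (C : MvPolynomial τ k →+* MvPolynomial σ (MvPolynomial τ k)).Flat :=
    RingHom.flat_algebraMap_iff.mpr inferInstance
  convert hC.comp (flat_algEquiv (sumAlgEquiv k σ τ).symm) using 1
  ext <;> simp

theorem flat_rename_of_injective {f : σ → τ} (hf : Function.Injective f) :
    (rename f : MvPolynomial σ k →ₐ[k] MvPolynomial τ k).toRingHom.Flat := by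
  classical
  let e : ((Set.range f)ᶜ : Set τ) ⊕ σ ≃ τ :=
    (Equiv.sumComm _ _).trans
      (((Equiv.ofInjective f hf).sumCongr (.refl _)).trans (Equiv.Set.sumCompl (Set.range f)))
  convert flat_rename_inr.comp (flat_algEquiv (renameEquiv k e)) using 1
  ext <;> simp [e]

theorem rename_supportedEquivMvPolynomial {s : Set σ} (p : supported k s) :
    rename Subtype.val (supportedEquivMvPolynomial s p) = (p : MvPolynomial σ k) := by
  obtain ⟨q, rfl⟩ := (supportedEquivMvPolynomial (R := k) s).symm.surjective p
  rw [AlgEquiv.apply_symm_apply]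
  simp [supportedEquivMvPolynomial]

theorem flat_supported (s : Set σ) : Module.Flat (supported k s) (MvPolynomial σ k) := by
  rw [← RingHom.flat_algebraMap_iff]
  convert (flat_algEquiv (supportedEquivMvPolynomial (R := k) s)).comp
    (flat_rename_of_injective Subtype.val_injective)
  exact RingHom.ext fun p => (rename_supportedEquivMvPolynomial p).symm

theorem isNoetherianRing_supported [IsNoetherianRing k] {s : Set σ} (hs : s.Finite) :
    IsNoetherianRing (supported k s) :=
  have := hs.to_subtype
  isNoetherianRing_of_ringEquiv _ (supportedEquivMvPolynomial s).symm.toRingEquiv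

theorem hasNoetherianGoingDownSubrings_mvPolynomial [IsNoetherianRing k] :
    HasNoetherianGoingDownSubrings (MvPolynomial σ k) := by
  classical
  intro S
  let s : Finset σ := S.biUnion vars
  have := flat_supported (k := k) (s : Set σ)
  refine ⟨(supported k (s : Set σ)).toSubring, fun p hp => ?_,
    isNoetherianRing_supported s.finite_toSet,
    inferInstanceAs (Algebra.HasGoingDown (supported k (s : Set σ)) (MvPolynomial σ k))⟩
  exact mem_supported.mpr (Finset.coe_subset.mpr (Finset.subset_biUnion_of_mem vars hp))

end MvPolynomial

theorem exists_finite_height_prime_with_nonzero_localization_general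
    {A : Type*} [CommRing A] (hA : HasNoetherianGoingDownSubrings A)
    (N : Type*) [AddCommGroup N] [Module A N] [Module.FinitePresentation A N] [Nontrivial N] :
    ∃ (𝔭 : Ideal A) (hp : 𝔭.IsPrime),
      Order.height (⟨𝔭, hp⟩ : PrimeSpectrum A) ≠ ⊤ ∧
      Nontrivial (LocalizedModule 𝔭.primeCompl N) := by
  obtain ⟨I, ⟨T, rfl⟩, hsupp⟩ := exists_fg_support_eq_zeroLocus A N
  obtain ⟨q, hq⟩ := Module.nonempty_support_of_nontrivial (R := A) (M := N)
  obtain ⟨p, hp, -⟩ := Ideal.exists_minimalPrimes_le (hsupp ▸ hq : q ∈ PrimeSpectrum.zeroLocus _)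
  refine ⟨p, hp.1.1, ?_, ?_⟩
  · rw [← PrimeSpectrum.height_eq_orderHeight]
    exact ((hA.height_le_card_of_mem_minimalPrimes_span hp).trans_lt (ENat.natCast_lt_top _)).ne
  · rw [← Module.mem_support_iff (p := ⟨p, hp.1.1⟩), hsupp]
    exact hp.1.2

/-- Let `A = ℂ[X₁, X₂, …] = MvPolynomial ℕ ℂ`. For any
nonzero finitely presented `A`-module `N` there is a prime ideal `𝔭` of `A`
of finite height such that the localization `N_𝔭` is nonzero. -/
theorem exists_finite_height_prime_with_nonzero_localization
    (N : Type) [AddCommGroup N] [Module (MvPolynomial ℕ ℂ) N]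
    [Module.FinitePresentation (MvPolynomial ℕ ℂ) N] (hN : Nontrivial N) :
    ∃ (𝔭 : Ideal (MvPolynomial ℕ ℂ)) (hp : 𝔭.IsPrime),
      Order.height (⟨𝔭, hp⟩ : PrimeSpectrum (MvPolynomial ℕ ℂ)) ≠ ⊤ ∧
      Nontrivial (LocalizedModule 𝔭.primeCompl N) :=
  exists_finite_height_prime_with_nonzero_localization_general
    hasNoetherianGoingDownSubrings_mvPolynomial N
end

section
/- Let A = ℂ[X₁, X₂, X₃, …] be the polynomial algebra over ℂ in countably infinitely many variables. Every bounded cochain complex of A-modules all of whose cohomology modules are finitely presented is quasi-isomorphic to a bounded complex of finite rank free A-modules; that is, for such a complex C there exist a bounded cochain complex F with all terms free A-modules of finite rank and a quasi-isomorphism (a chain map inducing isomorphisms on all cohomology) F → C. -/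
open CategoryTheory Limits

/-!
A bounded complex is an iterated extension of shifts of its cohomology modules, by canonical
truncation. Bounded complexes of finite free modules are K-projective and stable under mapping
cones, so they form a triangulated subcategory of the derived category, and an isomorphism in the
derived category out of such a complex is induced by an honest chain map. It therefore suffices to
resolve a single finitely presented module `M` by finitely many finite free modules.

The entries of a presentation matrix of `M` involve finitely many variables only, and the polynomial
ring is flat over the subring they generate, so finitely many variables suffice. One adjoins these
one at a time: if `M` is generated over `R[X]` by `v₁, …, vₙ` with relations of degree at most `d`,
let `N` be the `R`-span of the `X ^ l • vₖ` with `l ≤ d` and `N' = {n ∈ N | X • n ∈ N}`. Then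
`0 ⟶ R[X] ⊗ N' ⟶ R[X] ⊗ N ⟶ M ⟶ 0` is exact, where the first map is `X ⊗ n - 1 ⊗ X • n`, and `R[X]`
is flat over `R`.
-/

universe w v u

section BoundedComplexes

variable {C : Type u} [Category.{v} C] [Abelian C] (P : ObjectProperty C)

/-- A cochain complex which is bounded and whose terms all satisfy the property `P`. -/
structure IsBoundedWithTerms (K : CochainComplex C ℤ) : Prop where
  prop_X (i : ℤ) : P (K.X i)
  bounded : ∃ a b : ℤ, ∀ i : ℤ, (i < a ∨ b < i) → IsZero (K.X i)

namespace IsBoundedWithTerms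

variable {P} {K L : CochainComplex C ℤ}

lemma single [P.IsClosedUnderIsomorphisms] [P.ContainsZero] {X : C} (hX : P X) (n : ℤ) :
    IsBoundedWithTerms P ((HomologicalComplex.single C (ComplexShape.up ℤ) n).obj X) where
  prop_X i := by
    obtain rfl | hi := eq_or_ne i n
    · exact P.prop_of_iso (HomologicalComplex.singleObjXSelf (ComplexShape.up ℤ) i X).symm hX
    · exact P.prop_of_isZero (HomologicalComplex.isZero_single_obj_X (ComplexShape.up ℤ) n X i hi)
  bounded := ⟨n, n, fun i hi ↦
    HomologicalComplex.isZero_single_obj_X (ComplexShape.up ℤ) n X i (by lia)⟩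

lemma shift (hK : IsBoundedWithTerms P K) (n : ℤ) : IsBoundedWithTerms P (K⟦n⟧) where
  prop_X i := hK.prop_X (i + n)
  bounded := by
    obtain ⟨a, b, h⟩ := hK.bounded
    exact ⟨a - n, b - n, fun i hi ↦ h (i + n) (by lia)⟩

lemma mappingCone [P.IsClosedUnderIsomorphisms] [P.IsClosedUnderBinaryProducts]
    (hK : IsBoundedWithTerms P K) (hL : IsBoundedWithTerms P L) (φ : K ⟶ L) :
    IsBoundedWithTerms P (CochainComplex.mappingCone φ) where
  prop_X i := P.prop_of_iso
    (HomologicalComplex.homotopyCofiber.XIsoBiprod φ i (i + 1) rfl ≪≫ biprod.isoProd _ _).symm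
    (P.prop_prod _ _ (hK.prop_X (i + 1)) (hL.prop_X i))
  bounded := by
    obtain ⟨a, b, hab⟩ := hK.bounded
    obtain ⟨a', b', hab'⟩ := hL.bounded
    refine ⟨min (a - 1) a', max b b', fun i hi ↦ ?_⟩
    exact ((biprod_isZero_iff _ _).2 ⟨hab _ (by lia), hab' _ (by lia)⟩).of_iso
      (HomologicalComplex.homotopyCofiber.XIsoBiprod φ i (i + 1) rfl)

lemma isKProjective (hP : P ≤ isProjective C) (hK : IsBoundedWithTerms P K) :
    K.IsKProjective := by
  obtain ⟨_, b, hb⟩ := hK.bounded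
  have : K.IsStrictlyLE b := (K.isStrictlyLE_iff b).2 fun i hi ↦ hb i (.inr hi)
  have (n : ℤ) : Projective (K.X n) := hP _ (hK.prop_X n)
  exact CochainComplex.isKProjective_of_projective K b

end IsBoundedWithTerms

section DerivedCategory

open DerivedCategory

variable [HasDerivedCategory.{w} C]

lemma Q_map_surjective_of_isKProjective (K L : CochainComplex C ℤ) [K.IsKProjective] :
    Function.Surjective (Q.map : (K ⟶ L) → (Q.obj K ⟶ Q.obj L)) := by
  intro f
  let e := quotientCompQhIso C
  obtain ⟨g, hg⟩ := (CochainComplex.IsKProjective.Qh_map_bijective K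
    ((HomotopyCategory.quotient C (ComplexShape.up ℤ)).obj L)).surjective
      (e.hom.app K ≫ f ≫ e.inv.app L)
  obtain ⟨h, rfl⟩ := (HomotopyCategory.quotient _ _).map_surjective g
  refine ⟨h, ?_⟩
  rw [← cancel_epi (e.hom.app K), ← quotientCompQhIso_hom_naturality, hg]
  simp [e]

/-- The objects of the derived category which are represented by bounded complexes with terms
in `P`. For `P` the finitely generated projective modules, these are the perfect complexes. -/
abbrev derivedBounded : ObjectProperty (DerivedCategory C) :=
  ObjectProperty.map (IsBoundedWithTerms P) Q

instance : (derivedBounded P).IsStableUnderShift ℤ where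
  isStableUnderShiftBy n := ⟨by
    rintro X ⟨F, hF, ⟨e⟩⟩
    exact ⟨F⟦n⟧, hF.shift n, ⟨(Q.commShiftIso n).app F ≪≫ (shiftFunctor _ n).mapIso e⟩⟩⟩

variable {P}

lemma derivedBounded_singleFunctor_of_prop [P.IsClosedUnderIsomorphisms] [P.ContainsZero] {X : C}
    (hX : P X) : derivedBounded P ((singleFunctor C 0).obj X) :=
  ⟨_, .single hX 0, ⟨Iso.refl _⟩⟩

lemma isTriangulated_derivedBounded [P.IsClosedUnderIsomorphisms] [P.ContainsZero]
    [P.IsClosedUnderBinaryProducts] (hP : P ≤ isProjective C) :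
    (derivedBounded P).IsTriangulated := by
  have hzero : (derivedBounded P).ContainsZero :=
    ⟨_, (singleFunctor C 0).map_isZero (isZero_zero C),
      derivedBounded_singleFunctor_of_prop P.prop_zero⟩
  have : (derivedBounded P).IsTriangulatedClosed₃ := .mk' (by
    rintro T hT ⟨K, hK, ⟨e⟩⟩ ⟨L, hL, ⟨e'⟩⟩
    have := hK.isKProjective hP
    obtain ⟨φ, hφ⟩ := Q_map_surjective_of_isKProjective K L (e.hom ≫ T.mor₁ ≫ e'.inv)
    exact ⟨_, hK.mappingCone hL φ, ⟨Pretriangulated.Triangle.π₃.mapIso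
      (Pretriangulated.isoTriangleOfIso₁₂ _ _ (mappingCone_triangle_distinguished φ) hT e e'
        (by change Q.map φ ≫ e'.hom = e.hom ≫ T.mor₁; simp [hφ]))⟩⟩)
  exact { toIsTriangulatedClosed₂ := .of_isTriangulatedClosed₃ }

lemma exists_quasiIso_of_derivedBounded (hP : P ≤ isProjective C) {K : CochainComplex C ℤ}
    (hK : derivedBounded P (Q.obj K)) :
    ∃ (F : CochainComplex C ℤ) (f : F ⟶ K), IsBoundedWithTerms P F ∧ QuasiIso f := by
  obtain ⟨F, hF, ⟨e⟩⟩ := hK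
  have := hF.isKProjective hP
  obtain ⟨f, hf⟩ := Q_map_surjective_of_isKProjective F K e.hom
  refine ⟨F, f, hF, ?_⟩
  rw [← isIso_Q_map_iff_quasiIso, hf]
  infer_instance

end DerivedCategory

section Devissage

lemma isZero_homology_truncLE_or_nonempty_iso (K : CochainComplex C ℤ) (n i : ℤ) :
    IsZero ((K.truncLE n).homology i) ∨ Nonempty (K.homology i ≅ (K.truncLE n).homology i) := by
  obtain hi | hi := lt_or_ge n i
  · exact .inl ((K.truncLE n).isZero_of_isLE n i)
  · have := K.quasiIsoAt_ιTruncLE n i hi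
    exact .inr ⟨(isoOfQuasiIsoAt (K.ιTruncLE n) i).symm⟩

lemma isGE_truncLE (K : CochainComplex C ℤ) (a n : ℤ) [K.IsGE a] : (K.truncLE n).IsGE a := by
  refine ((K.truncLE n).isGE_iff a).2 fun i hi ↦ ?_
  rw [HomologicalComplex.exactAt_iff_isZero_homology]
  obtain h | ⟨⟨e⟩⟩ := isZero_homology_truncLE_or_nonempty_iso K n i
  exacts [h, (K.isZero_of_isGE a i).of_iso e.symm]

lemma isLE_truncGE (K : CochainComplex C ℤ) (n : ℤ) [K.IsLE n] : (K.truncGE n).IsLE n := by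
  refine ((K.truncGE n).isLE_iff n).2 fun i hi ↦ ?_
  rw [HomologicalComplex.exactAt_iff_isZero_homology]
  have := K.quasiIsoAt_πTruncGE n i hi.le
  exact (K.isZero_of_isLE n i).of_iso (isoOfQuasiIsoAt (K.πTruncGE n) i).symm

open DerivedCategory

variable [HasDerivedCategory.{w} C]

lemma nonempty_Q_obj_iso_singleFunctor_homology (K : CochainComplex C ℤ) (n : ℤ) [K.IsGE n]
    [K.IsLE n] : Nonempty (Q.obj K ≅ (singleFunctor C n).obj (K.homology n)) := by
  obtain ⟨Y, ⟨e⟩⟩ := exists_iso_singleFunctor_obj_of_isGE_of_isLE (Q.obj K) n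
  let e' : K.homology n ≅ Y :=
    ((homologyFunctorFactors C n).app K).symm ≪≫ (homologyFunctor C n).mapIso e ≪≫
      (homologyFunctorFactors C n).app _ ≪≫
      HomologicalComplex.singleObjHomologySelfIso (ComplexShape.up ℤ) n Y
  exact ⟨e ≪≫ (singleFunctor C n).mapIso e'.symm⟩

variable (P : ObjectProperty (DerivedCategory C)) [P.IsClosedUnderIsomorphisms]

lemma prop_singleFunctor_of_prop_singleFunctor_zero [P.IsStableUnderShift ℤ] {X : C}
    (hX : P ((singleFunctor C 0).obj X)) (n : ℤ) : P ((singleFunctor C n).obj X) :=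
  P.prop_of_iso (((singleFunctors C).shiftIso (-n) n 0 (by lia)).app X) (P.le_shift (-n) _ hX)

lemma prop_Q_obj_of_isGE_of_isLE [P.IsStableUnderShift ℤ] (K : CochainComplex C ℤ) (n : ℤ)
    [K.IsGE n] [K.IsLE n] (hK : P ((singleFunctor C 0).obj (K.homology n))) : P (Q.obj K) := by
  obtain ⟨e⟩ := nonempty_Q_obj_iso_singleFunctor_homology K n
  exact P.prop_of_iso e.symm (prop_singleFunctor_of_prop_singleFunctor_zero P hK n)

lemma prop_Q_obj_of_prop_singleFunctor_homology [P.IsTriangulated]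
    (K : CochainComplex C ℤ) (a b : ℤ) [K.IsGE a] [K.IsLE b]
    (hK : ∀ i, P ((singleFunctor C 0).obj (K.homology i))) : P (Q.obj K) := by
  obtain hba | hab := lt_or_ge b a
  · exact P.prop_of_isZero (TStructure.t.isZero (Q.obj K) b a)
  induction b, hab using Int.leInduction generalizing K with
  | base => exact prop_Q_obj_of_isGE_of_isLE P K a (hK a)
  | succ b _ ih =>
    have hLE : P (Q.obj (K.truncLE b)) := by
      have := isGE_truncLE K a b
      refine ih (K.truncLE b) fun i ↦ ?_
      obtain h | ⟨⟨e⟩⟩ := isZero_homology_truncLE_or_nonempty_iso K b i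
      exacts [P.prop_of_isZero ((singleFunctor C 0).map_isZero h),
        P.prop_of_iso ((singleFunctor C 0).mapIso e) (hK i)]
    have hGE : P (Q.obj (K.truncGE (b + 1))) := by
      have := isLE_truncGE K (b + 1)
      exact prop_Q_obj_of_isGE_of_isLE P _ (b + 1) (P.prop_of_iso
        ((singleFunctor C 0).mapIso (isoOfQuasiIsoAt (K.πTruncGE (b + 1)) (b + 1))) (hK (b + 1)))
    exact P.ext_of_isTriangulatedClosed₂ _
      (triangleOfSES_distinguished (K.shortComplexTruncLE_shortExact b)) hLE
      (P.prop_of_iso (asIso (Q.map (K.shortComplexTruncLEX₃ToTruncGE b (b + 1)))).symm hGE)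

end Devissage

end BoundedComplexes

section PolynomialModule

open TensorProduct Polynomial

section LinearPencil

variable {R D N : Type*} [CommRing R] [AddCommGroup D] [Module R D] [AddCommGroup N] [Module R N]

/-- The linear pencil `X * i - m : R[X] ⊗ D → R[X] ⊗ N` of two linear maps `i m : D → N`. -/
noncomputable def linearPencil (i m : D →ₗ[R] N) : R[X] ⊗[R] D →ₗ[R[X]] R[X] ⊗[R] N :=
  (X : R[X]) • i.baseChange R[X] - m.baseChange R[X]

lemma linearPencil_tmul (i m : D →ₗ[R] N) (p : R[X]) (x : D) :
    linearPencil i m (p ⊗ₜ x) = (X * p) ⊗ₜ i x - p ⊗ₜ m x := by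
  simp [linearPencil, smul_tmul']

/-- An element `∑ j, X ^ j ⊗ n j` of `R[X] ⊗ N`, viewed as the family of its coefficients. -/
noncomputable def tensorCoeff (R N : Type*) [CommRing R] [AddCommGroup N] [Module R N] :
    R[X] ⊗[R] N ≃ₗ[R] (ℕ →₀ N) :=
  TensorProduct.equivFinsuppOfBasisLeft (Polynomial.basisMonomials R)

lemma tensorCoeff_tmul (p : R[X]) (n : N) (j : ℕ) :
    tensorCoeff R N (p ⊗ₜ n) j = p.coeff j • n := by
  simp only [tensorCoeff, equivFinsuppOfBasisLeft_apply_tmul_apply]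
  rfl

lemma tensorCoeff_linearPencil_succ (i m : D →ₗ[R] N) (z : R[X] ⊗[R] D) (j : ℕ) :
    tensorCoeff R N (linearPencil i m z) (j + 1) =
      i (tensorCoeff R D z j) - m (tensorCoeff R D z (j + 1)) := by
  induction z with
  | zero => simp
  | add z w hz hw => simp only [map_add, Finsupp.add_apply, hz, hw]; abel
  | tmul p x => simp [linearPencil_tmul, tensorCoeff_tmul]

lemma linearPencil_injective {i : D →ₗ[R] N} (m : D →ₗ[R] N) (hi : Function.Injective i) :
    Function.Injective (linearPencil i m) := by
  rw [injective_iff_map_eq_zero]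
  intro z hz
  by_contra hz0
  have hsupp : (tensorCoeff R D z).support.Nonempty := by simpa using hz0
  obtain ⟨j, hj, hmax⟩ := Finset.exists_max_image _ id hsupp
  have htop : tensorCoeff R D z (j + 1) = 0 := by
    by_contra h
    simpa using hmax (j + 1) (Finsupp.mem_support_iff.2 h)
  have hcoeff := tensorCoeff_linearPencil_succ i m z j
  rw [hz, htop] at hcoeff
  exact Finsupp.mem_support_iff.1 hj (hi (by simpa using hcoeff.symm))

end LinearPencil

/-- The `R`-submodule of an `R[X]`-module generated by the elements `X ^ l • v k` with `l ≤ d`. -/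
def spanXPowSMul (R : Type*) {ι M : Type*} [CommRing R] [AddCommGroup M] [Module R M]
    [Module R[X] M] (v : ι → M) (d : ℕ) : Submodule R M :=
  Submodule.span R (Set.range fun x : ι × Fin (d + 1) ↦ (X ^ (x.2 : ℕ) : R[X]) • v x.1)

variable {R M ι κ : Type*} [CommRing R] [AddCommGroup M] [Module R M] [Module R[X] M] {d : ℕ}

lemma X_pow_smul_mem_spanXPowSMul (v : ι → M) {l : ℕ} (hl : l ≤ d) (k : ι) :
    (X ^ l : R[X]) • v k ∈ spanXPowSMul R v d :=
  Submodule.subset_span ⟨(k, ⟨l, by lia⟩), rfl⟩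

lemma mem_spanXPowSMul (v : ι → M) (d : ℕ) (k : ι) : v k ∈ spanXPowSMul R v d := by
  simpa using X_pow_smul_mem_spanXPowSMul (R := R) v d.zero_le k

variable [IsScalarTower R R[X] M]

lemma polynomial_smul_mem {x : M} (N : Submodule R M)
    (hx : ∀ l ≤ d, (X ^ l : R[X]) • x ∈ N) {p : R[X]} (hp : p.natDegree ≤ d) : p • x ∈ N := by
  rw [p.as_sum_range' (d + 1) (by lia), Finset.sum_smul]
  refine N.sum_mem fun l hl ↦ ?_
  rw [← smul_X_eq_monomial, smul_assoc]
  exact N.smul_mem _ (hx l (by simpa [Nat.lt_succ_iff] using hl))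

section Extension

variable {T : Type*} [AddCommGroup T] [Module R T] [Module R[X] T] [IsScalarTower R R[X] T]
  {N : Submodule R M} {τ : N →ₗ[R] T}

lemma exists_coe_eq_smul_and_map_eq_smul
    (hτ : ∀ n n' : N, (n' : M) = (X : R[X]) • (n : M) → τ n' = (X : R[X]) • τ n)
    {n : N} (hn : ∀ l ≤ d, (X ^ l : R[X]) • (n : M) ∈ N) {p : R[X]}
    (hp : p.natDegree ≤ d) : ∃ n' : N, (n' : M) = p • (n : M) ∧ τ n' = p • τ n := by
  let graph : Submodule R (M × T) := LinearMap.range (N.subtype.prod τ)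
  have hpow (l : ℕ) (hl : l ≤ d) : (X ^ l : R[X]) • ((n : M), τ n) ∈ graph := by
    refine ⟨⟨_, hn l hl⟩, ?_⟩
    suffices τ ⟨_, hn l hl⟩ = (X ^ l : R[X]) • τ n by simpa
    induction l with
    | zero => simp
    | succ l ih =>
      rw [hτ ⟨_, hn l (by lia)⟩ _ (by simp [pow_succ', mul_smul]), ih (by lia), pow_succ', mul_smul]
  obtain ⟨n', hn'⟩ := polynomial_smul_mem graph hpow hp
  exact ⟨n', congr($hn'.1), congr($hn'.2)⟩

end Extension

variable [Fintype ι] [Finite κ] [DecidableEq κ] {v : ι → M}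
  {g : (κ → R[X]) →ₗ[R[X]] (ι → R[X])}

lemma exists_linearMap_extending_of_presentation
    (hv : Function.Surjective (Fintype.linearCombination R[X] v))
    (hgv : Function.Exact g (Fintype.linearCombination R[X] v))
    (hd : ∀ j k, (g (Pi.single j 1) k).natDegree ≤ d)
    {T : Type*} [AddCommGroup T] [Module R T] [Module R[X] T] [IsScalarTower R R[X] T]
    {τ : spanXPowSMul R v d →ₗ[R] T}
    (hτ : ∀ n n' : spanXPowSMul R v d, (n' : M) = (X : R[X]) • (n : M) → τ n' = (X : R[X]) • τ n) :
    ∃ ψ : M →ₗ[R[X]] T, ∀ n : spanXPowSMul R v d, ψ n = τ n := by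
  let w (k : ι) : spanXPowSMul R v d := ⟨v k, mem_spanXPowSMul v d k⟩
  have hw (k : ι) {p : R[X]} (hp : p.natDegree ≤ d) :=
    exists_coe_eq_smul_and_map_eq_smul hτ (n := w k)
      (fun l hl ↦ X_pow_smul_mem_spanXPowSMul v hl k) hp
  let s := Fintype.linearCombination R[X] fun k ↦ τ (w k)
  have hsg : s ∘ₗ g = 0 := by
    ext j
    choose n hn hτn using fun k ↦ hw k (hd j k)
    have hsum : ∑ k, n k = 0 := by
      apply Subtype.ext
      simpa [Fintype.linearCombination_apply, hn, w] using hgv.apply_apply_eq_zero (Pi.single j 1)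
    have hsτ : s (g (Pi.single j 1)) = τ (∑ k, n k) := by
      simp [s, Fintype.linearCombination_apply, hτn]
    simp [hsτ, hsum]
  obtain ⟨ψ, hψ⟩ := (LinearMap.exact_lcomp_of_exact_of_surjective T hgv hv s).1 hsg
  have hψv (k : ι) : ψ (v k) = τ (w k) := by
    classical
    simpa [s] using congr($hψ (Pi.single k 1))
  refine ⟨ψ, fun n ↦ ?_⟩
  obtain ⟨m, hm⟩ := n
  induction hm using Submodule.span_induction with
  | mem m hm =>
    obtain ⟨⟨k, l⟩, rfl⟩ := hm
    obtain ⟨n, hn, hτn⟩ := hw k ((natDegree_X_pow_le (R := R) (l : ℕ)).trans (by lia))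
    obtain rfl : n = ⟨_, X_pow_smul_mem_spanXPowSMul v (by lia : (l : ℕ) ≤ d) k⟩ := Subtype.ext hn
    simp [hψv, hτn]
  | zero => exact (map_zero ψ).trans (map_zero τ).symm
  | add x y hx hy ihx ihy => rw [map_add, ihx, ihy, ← map_add]; rfl
  | smul a x hx ihx => rw [LinearMap.map_smul_of_tower, ihx, ← map_smul]; rfl

/-- The elements `n` of an `R`-submodule `N` of an `R[X]`-module such that `X • n ∈ N`. -/
noncomputable def mulXDomain (N : Submodule R M) : Submodule R N :=
  N.comap (Algebra.lsmul R R M (X : R[X]) ∘ₗ N.subtype)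

/-- Multiplication by `X`, as a partially defined endomorphism of an `R`-submodule of an
`R[X]`-module. -/
noncomputable def mulX (N : Submodule R M) : mulXDomain N →ₗ[R] N :=
  (Algebra.lsmul R R M (X : R[X]) ∘ₗ N.subtype).restrict fun _ h ↦ h

@[simp]
lemma coe_mulX (N : Submodule R M) (n : mulXDomain N) :
    (mulX N n : M) = (X : R[X]) • ((n : N) : M) :=
  rfl

/-- The multiplication map `R[X] ⊗ N → M`. -/
noncomputable def polynomialSMul (N : Submodule R M) : R[X] ⊗[R] N →ₗ[R[X]] M :=
  LinearMap.liftBaseChange R[X] N.subtype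

lemma polynomialSMul_tmul (N : Submodule R M) (p : R[X]) (n : N) :
    polynomialSMul N (p ⊗ₜ n) = p • (n : M) :=
  LinearMap.liftBaseChange_tmul ..

lemma polynomialSMul_comp_linearPencil (N : Submodule R M) :
    polynomialSMul N ∘ₗ linearPencil (mulXDomain N).subtype (mulX N) = 0 := by
  ext n
  simp [linearPencil_tmul, polynomialSMul_tmul]

lemma exact_linearPencil_polynomialSMul
    (hv : Function.Surjective (Fintype.linearCombination R[X] v))
    (hgv : Function.Exact g (Fintype.linearCombination R[X] v))
    (hd : ∀ j k, (g (Pi.single j 1) k).natDegree ≤ d) :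
    Function.Exact (linearPencil (mulXDomain (spanXPowSMul R v d)).subtype (mulX _))
      (polynomialSMul (spanXPowSMul R v d)) := by
  set N := spanXPowSMul R v d
  let δ := linearPencil (mulXDomain N).subtype (mulX N)
  let τ : N →ₗ[R] (R[X] ⊗[R] N) ⧸ LinearMap.range δ :=
    (LinearMap.range δ).mkQ.restrictScalars R ∘ₗ TensorProduct.mk R R[X] N 1
  have hτ (n n' : N) (h : (n' : M) = (X : R[X]) • (n : M)) : τ n' = (X : R[X]) • τ n := by
    have hn : n ∈ mulXDomain N := by simp [mulXDomain, ← h]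
    have hn' : mulX N ⟨n, hn⟩ = n' := Subtype.ext h.symm
    refine ((Submodule.Quotient.eq (LinearMap.range δ)
      (x := (X : R[X]) • ((1 : R[X]) ⊗ₜ[R] n)) (y := 1 ⊗ₜ n')).2 ⟨1 ⊗ₜ ⟨n, hn⟩, ?_⟩).symm
    simp [δ, linearPencil_tmul, hn', smul_tmul']
  obtain ⟨ψ, hψ⟩ := exists_linearMap_extending_of_presentation hv hgv hd hτ
  have hψ' : ψ ∘ₗ polynomialSMul N = (LinearMap.range δ).mkQ := by
    ext n
    exact (congrArg ψ ((polynomialSMul_tmul N 1 n).trans (one_smul _ _))).trans (hψ n)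
  refine LinearMap.exact_of_comp_eq_zero_of_ker_le_range (polynomialSMul_comp_linearPencil N)
    fun t ht ↦ ?_
  rw [← Submodule.ker_mkQ (LinearMap.range δ), ← hψ']
  simp [LinearMap.mem_ker.1 ht]

lemma polynomialSMul_spanXPowSMul_surjective
    (hv : Function.Surjective (Fintype.linearCombination R[X] v)) (d : ℕ) :
    Function.Surjective (polynomialSMul (spanXPowSMul R v d)) := by
  intro m
  obtain ⟨p, rfl⟩ := hv m
  exact ⟨∑ k, p k ⊗ₜ ⟨v k, mem_spanXPowSMul v d k⟩, by
    simp [polynomialSMul_tmul, Fintype.linearCombination_apply]⟩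

end PolynomialModule

section FiniteFreeResolution

open TensorProduct Polynomial

lemma exists_finitePresentation_baseChange_equiv {R : Type u} {S M : Type*} [CommRing R]
    [CommRing S] [Algebra R S] [AddCommGroup M] [Module S M] {m n : ℕ}
    {f : (Fin n → S) →ₗ[S] M} {g : (Fin m → S) →ₗ[S] (Fin n → S)}
    (hf : Function.Surjective f) (hgf : Function.Exact g f)
    (hg : ∀ j i, g (Pi.single j 1) i ∈ Set.range (algebraMap R S)) :
    ∃ (M₀ : Type u) (_ : AddCommGroup M₀) (_ : Module R M₀),
      Module.FinitePresentation R M₀ ∧ Nonempty (S ⊗[R] M₀ ≃ₗ[S] M) := by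
  choose a ha using hg
  let g₀ : (Fin m → R) →ₗ[R] (Fin n → R) := Fintype.linearCombination R a
  let em := piScalarRight R S S (Fin m)
  let en := piScalarRight R S S (Fin n)
  have hcomm : en.toLinearMap ∘ₗ g₀.baseChange S = g ∘ₗ em.toLinearMap := by
    ext j i
    have hj : (fun l ↦ algebraMap R S ((Pi.single j 1 : Fin m → R) l)) = Pi.single j 1 := by
      ext l
      by_cases hl : l = j <;> simp [hl]
    simp [en, em, g₀, Algebra.smul_def, hj, ha]
  have hrange : (LinearMap.range (g₀.baseChange S)).map en.toLinearMap = LinearMap.range g := by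
    rw [← LinearMap.range_comp, hcomm, LinearMap.range_comp, LinearEquiv.range,
      Submodule.map_top]
  have hex : Function.Exact (g₀.baseChange S) ((LinearMap.range g₀).mkQ.baseChange S) :=
    lTensor_exact S (LinearMap.exact_map_mkQ_range g₀) (Submodule.mkQ_surjective _)
  refine ⟨(Fin n → R) ⧸ LinearMap.range g₀, inferInstance, inferInstance,
    Module.finitePresentation_of_free_of_surjective _ (Submodule.mkQ_surjective _) ?_, ⟨?_⟩⟩
  · rw [Submodule.ker_mkQ]
    exact .of_finite
  have hq := LinearMap.lTensor_surjective S (LinearMap.range g₀).mkQ_surjective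
  exact (hex.linearEquivOfSurjective hq).symm ≪≫ₗ Submodule.Quotient.equiv _ _ en hrange ≪≫ₗ
    hgf.linearEquivOfSurjective hf

/-- Modules with a finite resolution by finite free modules, encoded as the smallest class of
modules which contains the finite free modules and is closed under cokernels of injective maps:
the mapping cone of a lift of an injective map to resolutions resolves its cokernel. -/
inductive HasFiniteFreeResolution (R : Type u) [CommRing R] :
    ∀ (M : Type u) [AddCommGroup M] [Module R M], Prop
  | of_free (M : Type u) [AddCommGroup M] [Module R M] [Module.Free R M] [Module.Finite R M] :
      HasFiniteFreeResolution R M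
  | of_exact {K M N : Type u} [AddCommGroup K] [Module R K] [AddCommGroup M] [Module R M]
      [AddCommGroup N] [Module R N] {f : K →ₗ[R] M} {g : M →ₗ[R] N}
      (hf : Function.Injective f) (hfg : Function.Exact f g) (hg : Function.Surjective g)
      (hK : HasFiniteFreeResolution R K) (hM : HasFiniteFreeResolution R M) :
      HasFiniteFreeResolution R N

namespace HasFiniteFreeResolution

variable {R : Type u} [CommRing R] {M N : Type u} [AddCommGroup M] [Module R M]
  [AddCommGroup N] [Module R N]

lemma of_linearEquiv (e : M ≃ₗ[R] N) (hM : HasFiniteFreeResolution R M) :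
    HasFiniteFreeResolution R N := by
  refine of_exact (f := (0 : PUnit.{u + 1} →ₗ[R] M)) (g := e.toLinearMap)
    (Function.injective_of_subsingleton _) (LinearMap.exact_iff.2 ?_) e.surjective (of_free _) hM
  rw [LinearEquiv.ker, LinearMap.range_zero]

lemma finite (hM : HasFiniteFreeResolution R M) : Module.Finite R M := by
  induction hM with
  | of_free _ => assumption
  | of_exact _ _ hg _ _ _ _ => exact .of_surjective _ hg

lemma baseChange (S : Type u) [CommRing S] [Algebra R S] [Module.Flat R S]
    (hM : HasFiniteFreeResolution R M) : HasFiniteFreeResolution S (S ⊗[R] M) := by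
  induction hM with
  | of_free M => exact of_free _
  | @of_exact K M N _ _ _ _ _ _ f g hf hfg hg _ _ ihK ihM =>
    exact of_exact (f := f.baseChange S) (g := g.baseChange S)
      (Module.Flat.lTensor_preserves_injective_linearMap f hf)
      (lTensor_exact S hfg hg) (LinearMap.lTensor_surjective S hg) ihK ihM

end HasFiniteFreeResolution

/-- A commutative ring over which every finitely presented module has a finite free resolution. -/
class HasFiniteFreeResolutions (R : Type u) [CommRing R] : Prop where
  hasFiniteFreeResolution (M : Type u) [AddCommGroup M] [Module R M]
    [Module.FinitePresentation R M] : HasFiniteFreeResolution R M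

namespace HasFiniteFreeResolutions

variable {R : Type u} [CommRing R]

instance of_isPrincipalIdealRing [IsDomain R] [IsPrincipalIdealRing R] :
    HasFiniteFreeResolutions R where
  hasFiniteFreeResolution M _ _ _ := by
    obtain ⟨n, f, hf⟩ := Module.Finite.exists_fin' R M
    exact .of_exact (LinearMap.ker f).subtype_injective f.exact_subtype_ker_map hf
      (.of_free _) (.of_free _)

lemma of_ringEquiv [HasFiniteFreeResolutions R] {S : Type u} [CommRing S] (e : R ≃+* S) :
    HasFiniteFreeResolutions S where
  hasFiniteFreeResolution M _ _ _ := by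
    algebraize [e.toRingHom]
    let : Module R M := Module.compHom M e.toRingHom
    have : IsScalarTower R S M := ⟨fun r s m ↦ by
      rw [Algebra.smul_def, mul_smul]; rfl⟩
    let eS : R ≃ₗ[R] S := LinearEquiv.ofBijective (Algebra.linearMap R S) e.bijective
    have : Module.Flat R S := .of_linearEquiv eS.symm
    have : Module.FinitePresentation R S := .of_equiv eS
    have : Module.FinitePresentation R M := .trans R M S
    have := TensorProduct.CompatibleSMul.of_algebraMap_surjective (R := R) S M e.surjective
    exact .of_linearEquiv (TensorProduct.lidOfCompatibleSMul R S M)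
      ((hasFiniteFreeResolution (R := R) M).baseChange S)

lemma of_forall_finset_subset_range {S : Type u} [CommRing S]
    (h : ∀ t : Finset S, ∃ (R : Type u) (_ : CommRing R) (_ : Algebra R S),
      HasFiniteFreeResolutions R ∧ Module.Flat R S ∧ (t : Set S) ⊆ Set.range (algebraMap R S)) :
    HasFiniteFreeResolutions S where
  hasFiniteFreeResolution M _ _ _ := by
    classical
    obtain ⟨n, m, f, g, hf, hgf⟩ := Module.FinitePresentation.exists_fin' S M
    let entry (x : Fin m × Fin n) : S := g (Pi.single x.1 1) x.2
    obtain ⟨R, _, _, _, _, ht⟩ := h (Finset.univ.image entry)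
    have hg (j : Fin m) (i : Fin n) : g (Pi.single j 1) i ∈ Set.range (algebraMap R S) :=
      ht (Finset.mem_coe.2 (Finset.mem_image_of_mem entry (Finset.mem_univ (j, i))))
    obtain ⟨M₀, _, _, _, ⟨e⟩⟩ := exists_finitePresentation_baseChange_equiv hf hgf hg
    exact .of_linearEquiv e ((hasFiniteFreeResolution (R := R) M₀).baseChange S)

instance polynomial [IsNoetherianRing R] [HasFiniteFreeResolutions R] :
    HasFiniteFreeResolutions R[X] where
  hasFiniteFreeResolution M _ _ _ := by
    let : Module R M := Module.compHom M (C : R →+* R[X])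
    have : IsScalarTower R R[X] M := ⟨fun r p m ↦ by rw [smul_eq_C_mul, mul_smul]; rfl⟩
    obtain ⟨n, m, f, g, hf, hgf⟩ := Module.FinitePresentation.exists_fin' R[X] M
    obtain ⟨v, rfl⟩ : ∃ v, Fintype.linearCombination R[X] v = f :=
      ⟨fun k ↦ f (Pi.single k 1), by ext; simp⟩
    let d := Finset.univ.sup fun x : Fin m × Fin n ↦ (g (Pi.single x.1 1) x.2).natDegree
    have hd (j : Fin m) (k : Fin n) : (g (Pi.single j 1) k).natDegree ≤ d :=
      Finset.le_sup (f := fun x : Fin m × Fin n ↦ (g (Pi.single x.1 1) x.2).natDegree)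
        (Finset.mem_univ (j, k))
    let N := spanXPowSMul R v d
    have : Module.Finite R N := .span_of_finite R (Set.finite_range _)
    have : Module.FinitePresentation R N := Module.finitePresentation_of_finite ..
    have : Module.FinitePresentation R (mulXDomain N) := Module.finitePresentation_of_finite ..
    exact .of_exact (linearPencil_injective (mulX N) (mulXDomain N).subtype_injective)
      (exact_linearPencil_polynomialSMul hf hgf hd) (polynomialSMul_spanXPowSMul_surjective hf d)
      ((hasFiniteFreeResolution (mulXDomain N)).baseChange R[X])
      ((hasFiniteFreeResolution N).baseChange R[X])

end HasFiniteFreeResolutions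

end FiniteFreeResolution

section MvPolynomial

open MvPolynomial

lemma flat_rename_subtypeVal (R : Type*) [CommRing R] {σ : Type*} (s : Set σ) :
    (rename (Subtype.val : s → σ) : MvPolynomial s R →ₐ[R] _).toRingHom.Flat := by
  classical
  let e := (sumAlgEquiv R (sᶜ : Set σ) s).symm.trans
    (renameEquiv R ((Equiv.sumComm _ _).trans (Equiv.Set.sumCompl s)))
  have he : (rename (Subtype.val : s → σ) : MvPolynomial s R →ₐ[R] _).toRingHom =
      e.toRingEquiv.toRingHom.comp (C : _ →+* MvPolynomial (sᶜ : Set σ) (MvPolynomial s R)) := by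
    apply ringHom_ext <;> intro <;> simp [e]
  rw [he]
  exact .comp (RingHom.flat_algebraMap_iff.2 inferInstance) (.of_bijective e.bijective)

lemma exists_finite_subset_range_rename {R : Type*} [CommSemiring R] {σ : Type*}
    (t : Finset (MvPolynomial σ R)) :
    ∃ s : Set σ, s.Finite ∧ (t : Set (MvPolynomial σ R)) ⊆
      Set.range (rename (R := R) (Subtype.val : s → σ)) := by
  classical
  refine ⟨t.biUnion vars, Finset.finite_toSet _, fun p hp ↦ ?_⟩
  refine exists_rename_eq_of_vars_subset_range p _ Subtype.val_injective ?_
  rw [Subtype.range_coe]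
  exact Finset.coe_subset.2 (Finset.subset_biUnion_of_mem vars hp)

namespace HasFiniteFreeResolutions

variable (R σ : Type u) [CommRing R] [IsNoetherianRing R] [HasFiniteFreeResolutions R]

lemma mvPolynomial_of_finite [Finite σ] : HasFiniteFreeResolutions (MvPolynomial σ R) := by
  induction σ using Finite.induction_empty_option with
  | of_equiv e _ => exact .of_ringEquiv (renameEquiv R e).toRingEquiv
  | h_empty => exact .of_ringEquiv (isEmptyAlgEquiv R PEmpty).symm.toRingEquiv
  | h_option _ => exact .of_ringEquiv (optionEquivLeft R _).symm.toRingEquiv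

instance mvPolynomial : HasFiniteFreeResolutions (MvPolynomial σ R) := by
  refine .of_forall_finset_subset_range fun t ↦ ?_
  obtain ⟨s, _, hs⟩ := exists_finite_subset_range_rename t
  have : Finite s := ‹s.Finite›
  exact ⟨MvPolynomial s R, inferInstance,
    (rename (R := R) (Subtype.val : s → σ)).toRingHom.toAlgebra,
    mvPolynomial_of_finite R s, flat_rename_subtypeVal R s, hs⟩

end HasFiniteFreeResolutions

end MvPolynomial

section FiniteFree

/-- The finite free modules, as a property of objects of the category of modules. -/
def finiteFree (R : Type u) [CommRing R] : ObjectProperty (ModuleCat.{v} R) :=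
  fun M ↦ Module.Free R M ∧ Module.Finite R M

variable {R : Type u} [CommRing R]

instance : (finiteFree.{v} R).IsClosedUnderIsomorphisms where
  of_iso e h := by
    obtain ⟨_, _⟩ := h
    exact ⟨.of_equiv e.toLinearEquiv, .equiv e.toLinearEquiv⟩

instance : (finiteFree.{v} R).ContainsZero :=
  ⟨ModuleCat.of R PUnit, ModuleCat.isZero_of_subsingleton _, inferInstance, inferInstance⟩

instance : (finiteFree.{v} R).IsClosedUnderBinaryProducts := .mk' (by
  rintro _ ⟨F, hF⟩
  obtain ⟨_, _⟩ := hF ⟨.left⟩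
  obtain ⟨_, _⟩ := hF ⟨.right⟩
  refine (finiteFree R).prop_of_iso ((ModuleCat.biprodIsoProd _ _).symm ≪≫ biprod.isoProd _ _ ≪≫
    (HasLimit.isoOfNatIso (diagramIsoPair F)).symm) ⟨?_, ?_⟩ <;>
  · dsimp
    infer_instance)

lemma finiteFree_le_isProjective [Small.{v} R] : finiteFree.{v} R ≤ isProjective _ := by
  intro M hM
  have : Module.Free R M := hM.1
  exact (IsProjective.iff_projective (M : Type v)).1 .of_free

lemma derivedBounded_singleFunctor_of_exact [Small.{v} R] [HasDerivedCategory.{w} (ModuleCat.{v} R)]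
    {K M N : ModuleCat.{v} R} {f : K →ₗ[R] M} {g : M →ₗ[R] N}
    (hf : Function.Injective f) (hfg : Function.Exact f g) (hg : Function.Surjective g)
    (hK : derivedBounded (finiteFree R) ((DerivedCategory.singleFunctor _ 0).obj K))
    (hM : derivedBounded (finiteFree R) ((DerivedCategory.singleFunctor _ 0).obj M)) :
    derivedBounded (finiteFree R) ((DerivedCategory.singleFunctor _ 0).obj N) := by
  have := isTriangulated_derivedBounded (finiteFree_le_isProjective (R := R))
  let S := ShortComplex.mk (ModuleCat.ofHom f) (ModuleCat.ofHom g) (by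
    rw [← ModuleCat.ofHom_comp, hfg.linearMap_comp_eq_zero]; rfl)
  have hS : S.ShortExact :=
    { exact := (ShortComplex.ShortExact.moduleCat_exact_iff_function_exact S).2 hfg
      mono_f := (ModuleCat.mono_iff_injective _).2 hf
      epi_g := (ModuleCat.epi_iff_surjective _).2 hg }
  exact (derivedBounded (finiteFree R)).ext_of_isTriangulatedClosed₃ _
    hS.singleTriangle_distinguished hK hM

lemma HasFiniteFreeResolution.derivedBounded_singleFunctor [Small.{v} R]
    [HasDerivedCategory.{w} (ModuleCat.{v} R)] {M : Type u} [AddCommGroup M] [Module R M]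
    (hM : HasFiniteFreeResolution R M) {X : ModuleCat.{v} R} (e : M ≃ₗ[R] X) :
    derivedBounded (finiteFree R) ((DerivedCategory.singleFunctor _ 0).obj X) := by
  induction hM generalizing X with
  | of_free M => exact derivedBounded_singleFunctor_of_prop ⟨.of_equiv e, .equiv e⟩
  | @of_exact K M N _ _ _ _ _ _ f g hf hfg hg hK hM ihK ihM =>
    have := hK.finite
    have := hM.finite
    have := Module.Finite.small.{v} R K
    have := Module.Finite.small.{v} R M
    let eK : K ≃ₗ[R] ModuleCat.of R (Shrink.{v} K) := (Shrink.linearEquiv R K).symm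
    let eM : M ≃ₗ[R] ModuleCat.of R (Shrink.{v} M) := (Shrink.linearEquiv R M).symm
    refine derivedBounded_singleFunctor_of_exact
      (f := eM.toLinearMap ∘ₗ f ∘ₗ eK.symm.toLinearMap)
      (g := e.toLinearMap ∘ₗ g ∘ₗ eM.symm.toLinearMap) ?_ ?_ ?_ (ihK eK) (ihM eM)
    · simpa using hf
    · refine (Function.Exact.iff_of_ladder_linearEquiv (e₁ := eK) (e₂ := eM) (e₃ := e) ?_ ?_).2 hfg
        <;> ext <;> simp
    · simpa using hg

lemma derivedBounded_singleFunctor_of_finitePresentation [HasFiniteFreeResolutions R] [Small.{v} R]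
    [HasDerivedCategory.{w} (ModuleCat.{v} R)] (X : ModuleCat.{v} R)
    [Module.FinitePresentation R X] :
    derivedBounded (finiteFree R) ((DerivedCategory.singleFunctor _ 0).obj X) := by
  obtain ⟨n, K, e, _⟩ := Module.FinitePresentation.exists_fin R X
  have : Module.FinitePresentation R ((Fin n → R) ⧸ K) := .of_equiv e
  exact (HasFiniteFreeResolutions.hasFiniteFreeResolution
    ((Fin n → R) ⧸ K)).derivedBounded_singleFunctor e.symm

end FiniteFree

theorem bounded_fp_cohomology_quasi_iso_to_finite_free_general {R : Type u} [CommRing R]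
    [HasFiniteFreeResolutions R] [Small.{v} R] (C : CochainComplex (ModuleCat.{v} R) ℤ)
    (hbdd : ∃ a b : ℤ, ∀ i : ℤ, (i < a ∨ b < i) → IsZero (C.homology i))
    (hfp : ∀ i : ℤ, Module.FinitePresentation R (C.homology i)) :
    ∃ (F : CochainComplex (ModuleCat.{v} R) ℤ)
      (_ : ∀ i : ℤ, Module.Free R (F.X i) ∧ Module.Finite R (F.X i))
      (_ : ∃ a b : ℤ, ∀ i : ℤ, (i < a ∨ b < i) → IsZero (F.X i))
      (f : F ⟶ C), QuasiIso f := by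
  let := HasDerivedCategory.standard (ModuleCat.{v} R)
  obtain ⟨a, b, h⟩ := hbdd
  have : C.IsGE a := (C.isGE_iff a).2 fun i hi ↦ (C.exactAt_iff_isZero_homology i).2 (h i (.inl hi))
  have : C.IsLE b := (C.isLE_iff b).2 fun i hi ↦ (C.exactAt_iff_isZero_homology i).2 (h i (.inr hi))
  have hP := finiteFree_le_isProjective (R := R)
  have := isTriangulated_derivedBounded hP
  obtain ⟨F, f, hF, hf⟩ := exists_quasiIso_of_derivedBounded hP
    (prop_Q_obj_of_prop_singleFunctor_homology _ C a b fun i ↦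
      derivedBounded_singleFunctor_of_finitePresentation (C.homology i))
  exact ⟨F, hF.prop_X, hF.bounded, f, hf⟩

/-- Let `A = ℂ[X₁, X₂, …] = MvPolynomial ℕ ℂ`. Every bounded
cochain complex of `A`-modules with finitely presented cohomology modules is
quasi-isomorphic to a bounded cochain complex of finite rank free `A`-modules:
there is a bounded complex `F` of finite free modules and a quasi-isomorphism
`F ⟶ C`. -/
theorem bounded_fp_cohomology_quasi_iso_to_finite_free
    (C : CochainComplex (ModuleCat (MvPolynomial ℕ ℂ)) ℤ)
    (hbdd : ∃ a b : ℤ, ∀ i : ℤ, (i < a ∨ b < i) → IsZero (C.X i))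
    (hfp : ∀ i : ℤ, Module.FinitePresentation (MvPolynomial ℕ ℂ) (C.homology i)) :
    ∃ (F : CochainComplex (ModuleCat (MvPolynomial ℕ ℂ)) ℤ)
      (_ : ∀ i : ℤ, Module.Free (MvPolynomial ℕ ℂ) (F.X i) ∧
        Module.Finite (MvPolynomial ℕ ℂ) (F.X i))
      (_ : ∃ a b : ℤ, ∀ i : ℤ, (i < a ∨ b < i) → IsZero (F.X i))
      (f : F ⟶ C), QuasiIso f := by
  obtain ⟨a, b, h⟩ := hbdd
  exact bounded_fp_cohomology_quasi_iso_to_finite_free_general C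
    ⟨a, b, fun i hi ↦ ShortComplex.isZero_homology_of_isZero_X₂ _ (h i hi)⟩ hfp
end
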